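/- Let L, T, τ > 0 and let f : ℝ → ℝ be continuously differentiable. Let q = (q₀, …, q₄) be a C¹ solution, L-periodic in x, of ∂_t q₀ + ∂_x f(q₀) − ∂_x q₄ = 0, τ ∂_t q₁ − ∂_x q₁ + ∂_x q₃ = q₄, τ ∂_t q₂ − ∂_x q₂ = −q₃, τ ∂_t q₃ + ∂_x q₁ = q₂, τ ∂_t q₄ − ∂_x q₀ = −q₁, and let q̄ = (q̄₀, …, q̄₄) be a C¹ tuple, L-periodic in x, satisfying the same five equations except that the first one carries a residual: ∂_t q̄₀ + ∂_x f(q̄₀) − ∂_x q̄₄ = τ R for some continuous R. Then the relative energy η(q, q̄)(t) = ∫₀^L ( ½ (q₀−q̄₀)² + (τ/2) Σ_{j=1}^{4} (q_j−q̄_j)² ) dx satisfies, for all t ∈ [0,T], d/dt η(q, q̄)(t) = −∫₀^L [ (q₀−q̄₀) ∂_x ( f(q₀) − f(q̄₀) ) + τ (q₀−q̄₀) R ] dx. -/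

import Mathlib

open MeasureTheory

/-- Partial derivative with respect to the first (time) variable. -/
noncomputable def pdt (u : ℝ → ℝ → ℝ) : ℝ → ℝ → ℝ :=
  fun t x => deriv (fun s => u s x) t

/-- Partial derivative with respect to the second (space) variable. -/
noncomputable def pdx (u : ℝ → ℝ → ℝ) : ℝ → ℝ → ℝ :=
  fun t x => deriv (fun y => u t y) x

theorem hasDerivAt_pdt {u : ℝ → ℝ → ℝ} (hu : ContDiff ℝ 1 (Function.uncurry u)) (t x : ℝ) :
    HasDerivAt (fun s => u s x) (pdt u t x) t := by
  have h : ContDiff ℝ 1 (fun s => u s x) :=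
    hu.comp (contDiff_id.prodMk contDiff_const : ContDiff ℝ 1 fun s : ℝ => (s, x))
  exact (h.differentiable one_ne_zero t).hasDerivAt

theorem hasDerivAt_pdx {u : ℝ → ℝ → ℝ} (hu : ContDiff ℝ 1 (Function.uncurry u)) (t x : ℝ) :
    HasDerivAt (fun y => u t y) (pdx u t x) x := by
  have h : ContDiff ℝ 1 (fun y => u t y) :=
    hu.comp (contDiff_const.prodMk contDiff_id : ContDiff ℝ 1 fun y : ℝ => (t, y))
  exact (h.differentiable one_ne_zero x).hasDerivAt

theorem continuous_uncurry_pdt {u : ℝ → ℝ → ℝ} (hu : ContDiff ℝ 1 (Function.uncurry u)) :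
    Continuous (Function.uncurry (pdt u)) := by
  have h : Function.uncurry (pdt u) =
      fun p : ℝ × ℝ => fderiv ℝ (Function.uncurry u) p (1, 0) := by
    ext ⟨t, x⟩
    exact ((hu.differentiable one_ne_zero (t, x)).hasFDerivAt.comp_hasDerivAt t
      ((hasDerivAt_id t).prodMk (hasDerivAt_const t x))).deriv
  rw [h]
  exact (hu.continuous_fderiv one_ne_zero).clm_apply continuous_const

theorem continuous_uncurry_pdx {u : ℝ → ℝ → ℝ} (hu : ContDiff ℝ 1 (Function.uncurry u)) :
    Continuous (Function.uncurry (pdx u)) := by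
  have h : Function.uncurry (pdx u) =
      fun p : ℝ × ℝ => fderiv ℝ (Function.uncurry u) p (0, 1) := by
    ext ⟨t, x⟩
    exact ((hu.differentiable one_ne_zero (t, x)).hasFDerivAt.comp_hasDerivAt x
      ((hasDerivAt_const x t).prodMk (hasDerivAt_id x))).deriv
  rw [h]
  exact (hu.continuous_fderiv one_ne_zero).clm_apply continuous_const

/-- Differentiation under the integral sign for a jointly `C¹` integrand. -/
theorem hasDerivAt_intervalIntegral_pdt {u : ℝ → ℝ → ℝ}
    (hu : ContDiff ℝ 1 (Function.uncurry u)) (a b t : ℝ) :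
    HasDerivAt (fun s => ∫ x in a..b, u s x) (∫ x in a..b, pdt u t x) t := by
  have hslice (s : ℝ) : Continuous (u s) := hu.continuous.uncurry_left s
  have hpdt := continuous_uncurry_pdt hu
  obtain ⟨C, hC⟩ := (isCompact_Icc.prod isCompact_uIcc :
    IsCompact (Set.Icc (t - 1) (t + 1) ×ˢ Set.uIcc a b)).exists_bound_of_continuousOn
      hpdt.continuousOn
  refine (intervalIntegral.hasDerivAt_integral_of_dominated_loc_of_deriv_le
    (bound := fun _ => C) (F' := pdt u)
    (Icc_mem_nhds (show t - 1 < t by linarith) (show t < t + 1 by linarith))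
    (.of_forall fun s => (hslice s).aestronglyMeasurable)
    ((hslice t).intervalIntegrable a b)
    (hpdt.uncurry_left t).aestronglyMeasurable
    (.of_forall fun x hx s hs => hC (s, x) ⟨hs, Set.uIoc_subset_uIcc hx⟩)
    intervalIntegrable_const
    (.of_forall fun x _ s _ => hasDerivAt_pdt hu s x)).2

theorem intervalIntegral_pdx_eq_zero_of_periodic {u : ℝ → ℝ → ℝ} {L : ℝ}
    (hu : ContDiff ℝ 1 (Function.uncurry u)) (t : ℝ) (hper : Function.Periodic (u t) L) :
    ∫ x in (0:ℝ)..L, pdx u t x = 0 := by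
  rw [intervalIntegral.integral_eq_sub_of_hasDerivAt (fun x _ => hasDerivAt_pdx hu t x)
    (((continuous_uncurry_pdx hu).uncurry_left t).intervalIntegrable 0 L), hper.eq, sub_self]

/-- Relative energy identity for the energy-consistent hyperbolic approximation
of the Kawahara-type equation: if `q` solves the system and `q̄` solves it with a
residual `τ R` in the first equation, then
`d/dt η(q, q̄) = -∫₀^L [(q₀ - q̄₀) ∂_x(f(q₀) - f(q̄₀)) + τ (q₀ - q̄₀) R] dx`. -/
theorem kawahara_relative_energy_identity
    (L T τ : ℝ) (hL : 0 < L) (hT : 0 < T) (hτ : 0 < τ)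
    (f : ℝ → ℝ) (hf : ContDiff ℝ 1 f)
    (q₀ q₁ q₂ q₃ q₄ qb₀ qb₁ qb₂ qb₃ qb₄ R : ℝ → ℝ → ℝ)
    (hq₀ : ContDiff ℝ 1 (Function.uncurry q₀))
    (hq₁ : ContDiff ℝ 1 (Function.uncurry q₁))
    (hq₂ : ContDiff ℝ 1 (Function.uncurry q₂))
    (hq₃ : ContDiff ℝ 1 (Function.uncurry q₃))
    (hq₄ : ContDiff ℝ 1 (Function.uncurry q₄))
    (hqb₀ : ContDiff ℝ 1 (Function.uncurry qb₀))
    (hqb₁ : ContDiff ℝ 1 (Function.uncurry qb₁))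
    (hqb₂ : ContDiff ℝ 1 (Function.uncurry qb₂))
    (hqb₃ : ContDiff ℝ 1 (Function.uncurry qb₃))
    (hqb₄ : ContDiff ℝ 1 (Function.uncurry qb₄))
    (hR : Continuous (Function.uncurry R))
    (hper₀ : ∀ t, Function.Periodic (q₀ t) L)
    (hper₁ : ∀ t, Function.Periodic (q₁ t) L)
    (hper₂ : ∀ t, Function.Periodic (q₂ t) L)
    (hper₃ : ∀ t, Function.Periodic (q₃ t) L)
    (hper₄ : ∀ t, Function.Periodic (q₄ t) L)
    (hperb₀ : ∀ t, Function.Periodic (qb₀ t) L)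
    (hperb₁ : ∀ t, Function.Periodic (qb₁ t) L)
    (hperb₂ : ∀ t, Function.Periodic (qb₂ t) L)
    (hperb₃ : ∀ t, Function.Periodic (qb₃ t) L)
    (hperb₄ : ∀ t, Function.Periodic (qb₄ t) L)
    (heq₀ : ∀ t ∈ Set.Icc (0:ℝ) T, ∀ x : ℝ,
      pdt q₀ t x + pdx (fun s y => f (q₀ s y)) t x - pdx q₄ t x = 0)
    (heq₁ : ∀ t ∈ Set.Icc (0:ℝ) T, ∀ x : ℝ,
      τ * pdt q₁ t x - pdx q₁ t x + pdx q₃ t x = q₄ t x)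
    (heq₂ : ∀ t ∈ Set.Icc (0:ℝ) T, ∀ x : ℝ,
      τ * pdt q₂ t x - pdx q₂ t x = - q₃ t x)
    (heq₃ : ∀ t ∈ Set.Icc (0:ℝ) T, ∀ x : ℝ,
      τ * pdt q₃ t x + pdx q₁ t x = q₂ t x)
    (heq₄ : ∀ t ∈ Set.Icc (0:ℝ) T, ∀ x : ℝ,
      τ * pdt q₄ t x - pdx q₀ t x = - q₁ t x)
    (heqb₀ : ∀ t ∈ Set.Icc (0:ℝ) T, ∀ x : ℝ,
      pdt qb₀ t x + pdx (fun s y => f (qb₀ s y)) t x - pdx qb₄ t x = τ * R t x)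
    (heqb₁ : ∀ t ∈ Set.Icc (0:ℝ) T, ∀ x : ℝ,
      τ * pdt qb₁ t x - pdx qb₁ t x + pdx qb₃ t x = qb₄ t x)
    (heqb₂ : ∀ t ∈ Set.Icc (0:ℝ) T, ∀ x : ℝ,
      τ * pdt qb₂ t x - pdx qb₂ t x = - qb₃ t x)
    (heqb₃ : ∀ t ∈ Set.Icc (0:ℝ) T, ∀ x : ℝ,
      τ * pdt qb₃ t x + pdx qb₁ t x = qb₂ t x)
    (heqb₄ : ∀ t ∈ Set.Icc (0:ℝ) T, ∀ x : ℝ,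
      τ * pdt qb₄ t x - pdx qb₀ t x = - qb₁ t x) :
    ∀ t ∈ Set.Icc (0:ℝ) T,
      HasDerivWithinAt
        (fun s => ∫ x in (0:ℝ)..L,
          ((q₀ s x - qb₀ s x) ^ 2 / 2
            + τ / 2 * ((q₁ s x - qb₁ s x) ^ 2 + (q₂ s x - qb₂ s x) ^ 2
                + (q₃ s x - qb₃ s x) ^ 2 + (q₄ s x - qb₄ s x) ^ 2)))
        (- ∫ x in (0:ℝ)..L,
          ((q₀ t x - qb₀ t x)
              * pdx (fun s y => f (q₀ s y) - f (qb₀ s y)) t x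
            + τ * (q₀ t x - qb₀ t x) * R t x))
        (Set.Icc (0:ℝ) T) t := by
  intro t ht
  have hE : ContDiff ℝ 1 (Function.uncurry fun s x => (q₀ s x - qb₀ s x) ^ 2 / 2
      + τ / 2 * ((q₁ s x - qb₁ s x) ^ 2 + (q₂ s x - qb₂ s x) ^ 2
        + (q₃ s x - qb₃ s x) ^ 2 + (q₄ s x - qb₄ s x) ^ 2)) :=
    (((hq₀.sub hqb₀).pow 2).div_const 2).add (contDiff_const.mul
      (((((hq₁.sub hqb₁).pow 2).add ((hq₂.sub hqb₂).pow 2)).add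
        ((hq₃.sub hqb₃).pow 2)).add ((hq₄.sub hqb₄).pow 2)))
  -- The linear part of the system contributes only the exact derivative of this flux.
  let G : ℝ → ℝ → ℝ := fun s x => (q₀ s x - qb₀ s x) * (q₄ s x - qb₄ s x)
    + ((q₁ s x - qb₁ s x) ^ 2 + (q₂ s x - qb₂ s x) ^ 2) / 2
    - (q₁ s x - qb₁ s x) * (q₃ s x - qb₃ s x)
  have hG : ContDiff ℝ 1 (Function.uncurry G) :=
    (((hq₀.sub hqb₀).mul (hq₄.sub hqb₄)).add
      ((((hq₁.sub hqb₁).pow 2).add ((hq₂.sub hqb₂).pow 2)).div_const 2)).sub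
      ((hq₁.sub hqb₁).mul (hq₃.sub hqb₃))
  have hGper : Function.Periodic (G t) L := fun x => by
    simp only [G, hper₀ t x, hper₁ t x, hper₂ t x, hper₃ t x, hper₄ t x,
      hperb₀ t x, hperb₁ t x, hperb₂ t x, hperb₃ t x, hperb₄ t x]
  have hfq : ContDiff ℝ 1 (Function.uncurry fun s y => f (q₀ s y)) := hf.comp hq₀
  have hfqb : ContDiff ℝ 1 (Function.uncurry fun s y => f (qb₀ s y)) := hf.comp hqb₀
  have hfd : ContDiff ℝ 1 (Function.uncurry fun s y => f (q₀ s y) - f (qb₀ s y)) :=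
    hfq.sub hfqb
  have hA : Continuous fun x => (q₀ t x - qb₀ t x)
        * pdx (fun s y => f (q₀ s y) - f (qb₀ s y)) t x
      + τ * (q₀ t x - qb₀ t x) * R t x := by
    have he : Continuous fun x => q₀ t x - qb₀ t x :=
      (hq₀.continuous.uncurry_left t).sub (hqb₀.continuous.uncurry_left t)
    exact (he.mul ((continuous_uncurry_pdx hfd).uncurry_left t)).add
      ((continuous_const.mul he).mul (hR.uncurry_left t))
  have hbalance (x : ℝ) : pdt (fun s x => (q₀ s x - qb₀ s x) ^ 2 / 2
      + τ / 2 * ((q₁ s x - qb₁ s x) ^ 2 + (q₂ s x - qb₂ s x) ^ 2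
        + (q₃ s x - qb₃ s x) ^ 2 + (q₄ s x - qb₄ s x) ^ 2)) t x
      = pdx G t x - ((q₀ t x - qb₀ t x)
          * pdx (fun s y => f (q₀ s y) - f (qb₀ s y)) t x
        + τ * (q₀ t x - qb₀ t x) * R t x) := by
    have ht₀ := (hasDerivAt_pdt hq₀ t x).fun_sub (hasDerivAt_pdt hqb₀ t x)
    have ht₁ := (hasDerivAt_pdt hq₁ t x).fun_sub (hasDerivAt_pdt hqb₁ t x)
    have ht₂ := (hasDerivAt_pdt hq₂ t x).fun_sub (hasDerivAt_pdt hqb₂ t x)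
    have ht₃ := (hasDerivAt_pdt hq₃ t x).fun_sub (hasDerivAt_pdt hqb₃ t x)
    have ht₄ := (hasDerivAt_pdt hq₄ t x).fun_sub (hasDerivAt_pdt hqb₄ t x)
    have hx₀ := (hasDerivAt_pdx hq₀ t x).fun_sub (hasDerivAt_pdx hqb₀ t x)
    have hx₁ := (hasDerivAt_pdx hq₁ t x).fun_sub (hasDerivAt_pdx hqb₁ t x)
    have hx₂ := (hasDerivAt_pdx hq₂ t x).fun_sub (hasDerivAt_pdx hqb₂ t x)
    have hx₃ := (hasDerivAt_pdx hq₃ t x).fun_sub (hasDerivAt_pdx hqb₃ t x)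
    have hx₄ := (hasDerivAt_pdx hq₄ t x).fun_sub (hasDerivAt_pdx hqb₄ t x)
    have hEt := (hasDerivAt_pdt hE t x).unique
      (((ht₀.fun_pow 2).div_const 2).fun_add
        (((((ht₁.fun_pow 2).fun_add (ht₂.fun_pow 2)).fun_add (ht₃.fun_pow 2)).fun_add
          (ht₄.fun_pow 2)).const_mul (τ / 2)))
    have hGx := (hasDerivAt_pdx hG t x).unique
      (((hx₀.fun_mul hx₄).fun_add (((hx₁.fun_pow 2).fun_add (hx₂.fun_pow 2)).div_const 2)).fun_sub
        (hx₁.fun_mul hx₃))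
    have hfx := (hasDerivAt_pdx hfd t x).unique
      ((hasDerivAt_pdx hfq t x).fun_sub (hasDerivAt_pdx hfqb t x))
    rw [hEt, hGx, hfx]
    norm_num only [pow_one, Nat.cast_ofNat]
    linear_combination
      (q₀ t x - qb₀ t x) * (heq₀ t ht x - heqb₀ t ht x)
      + (q₁ t x - qb₁ t x) * (heq₁ t ht x - heqb₁ t ht x)
      + (q₂ t x - qb₂ t x) * (heq₂ t ht x - heqb₂ t ht x)
      + (q₃ t x - qb₃ t x) * (heq₃ t ht x - heqb₃ t ht x)
      + (q₄ t x - qb₄ t x) * (heq₄ t ht x - heqb₄ t ht x)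
  have hmain := hasDerivAt_intervalIntegral_pdt hE 0 L t
  rw [intervalIntegral.integral_congr fun x _ => hbalance x,
    intervalIntegral.integral_sub
      (((continuous_uncurry_pdx hG).uncurry_left t).intervalIntegrable 0 L)
      (hA.intervalIntegrable 0 L),
    intervalIntegral_pdx_eq_zero_of_periodic hG t hGper, zero_sub] at hmain
  exact hmain.hasDerivWithinAt
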